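/- Let d = 3, let F = Σ_{|α|=2} X_α Y^α be the full Perazzo form in m ≥ 2 'y'-variables, and A_F = R/Ann_R(F) the full Perazzo algebra, with n + 1 = binom(m+1, m−1) the number of x-variables. Then the h-vector of A_F is (1, n+m+1, n+m+1, 1), and dim_K A_F = 2(n+m+2). -/

import Mathlib

open MvPolynomial

/-- The differential operator `∏_i ∂^{s i}/∂X_i^{s i}` acting on `K[X_i : i ∈ σ]`
(any order of composition gives the same operator, since partial derivatives commute). -/
noncomputable def diffOp {K : Type*} [CommSemiring K] {σ : Type*} [DecidableEq σ]
    (s : σ →₀ ℕ) : Module.End K (MvPolynomial σ K) :=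
  (s.support.toList.map fun i =>
    ((MvPolynomial.pderiv i).toLinearMap : Module.End K (MvPolynomial σ K)) ^ s i).prod

/-- The apolarity (differentiation) action `f ∘ F` of a polynomial `f` on a polynomial `F`:
each variable of `f` acts as partial differentiation with respect to the corresponding
variable of `F`. -/
noncomputable def diffAction {K : Type*} [CommSemiring K] {σ : Type*} [DecidableEq σ]
    (f F : MvPolynomial σ K) : MvPolynomial σ K :=
  ∑ s ∈ f.support, f.coeff s • diffOp s F

/-- The apolar annihilator ideal `Ann(F) = {f : f ∘ F = 0}`.  (This set is already an
ideal, so taking the ideal span does not change it.) -/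
noncomputable def annIdeal {K : Type*} [CommSemiring K] {σ : Type*} [DecidableEq σ]
    (F : MvPolynomial σ K) : Ideal (MvPolynomial σ K) :=
  Ideal.span {f | diffAction f F = 0}

/-- Multi-indices `α = (i_1, …, i_m) ∈ ℕ^m` with `i_1 + ⋯ + i_m = d - 1`,
indexing the `x`-variables of a full Perazzo algebra. -/
abbrev MIdx (m d : ℕ) := {α : Fin m → ℕ // ∑ i, α i = d - 1}

instance (m d : ℕ) : Fintype (MIdx m d) :=
  Fintype.ofFinset (Finset.Nat.antidiagonalTuple m (d - 1))
    (fun _ => Finset.Nat.mem_antidiagonalTuple)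

/-- The variable index set of a full Perazzo algebra:
`x_α` for `|α| = d - 1` together with `y_1, …, y_m`. -/
abbrev PIdx (m d : ℕ) := MIdx m d ⊕ Fin m

/-- The full Perazzo form `F = ∑_{|α| = d-1} X_α Y^α`. -/
noncomputable def perazzoForm (K : Type*) [CommSemiring K] (m d : ℕ) :
    MvPolynomial (PIdx m d) K :=
  ∑ α : MIdx m d, X (Sum.inl α) * ∏ j, X (Sum.inr j) ^ (α.1 j)

/-- The Hilbert function of the graded quotient `K[X_i : i ∈ σ] / I` in degree `n`:
the `K`-dimension of the image of the homogeneous degree-`n` part. -/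
noncomputable def hilbertFn {K : Type*} [Field K] {σ : Type*}
    (I : Ideal (MvPolynomial σ K)) (n : ℕ) : ℕ :=
  Module.finrank K
    ((MvPolynomial.homogeneousSubmodule σ K n).map (Ideal.Quotient.mkₐ K I).toLinearMap)

/-!
The map `f ↦ f ∘ F` identifies `(A_F)_k` with the space `R_k ∘ F` of order `k` partial derivatives
of `F`, which consists of forms of degree `d - k` when `F` is a form of degree `d`. Suppose that
the partial derivatives of order `d - 1` contain every variable. Then `h_{d-1}` is the number of
variables and `h_0 = h_d = 1`. If a linear form `ℓ` kills `F`, it also kills every partial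
derivative of `F`, hence every variable, so `ℓ = 0` and `h_1` is the number of variables too.

The full Perazzo form has this property because `Y^α ∘ F = α! X_α` and
`x_α y_j^{d-2} ∘ F = (d-1)! Y_j` for `Y^α = Y_j^{d-1}`.
-/

section Apolarity

variable {K : Type*} [CommSemiring K] {σ : Type*}

theorem commute_pderiv (i j : σ) :
    Commute ((pderiv i).toLinearMap : Module.End K (MvPolynomial σ K))
      (pderiv j).toLinearMap := by
  obtain rfl | hij := eq_or_ne i j
  · exact Commute.refl _
  · refine LinearMap.ext fun p => MvPolynomial.ext _ _ fun s => ?_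
    simp [coeff_pderiv, hij, hij.symm, add_right_comm, mul_right_comm]

open scoped IsMulCommutative in
/-- The algebra map sending each variable to the corresponding partial derivative. The target is
not commutative, so `aeval` is applied inside the commutative subalgebra generated by the partial
derivatives. -/
noncomputable def diffAlgHom (K σ : Type*) [CommSemiring K] :
    MvPolynomial σ K →ₐ[K] Module.End K (MvPolynomial σ K) :=
  let D : σ → Module.End K (MvPolynomial σ K) := fun i => (pderiv i).toLinearMap
  have : IsMulCommutative (Algebra.adjoin K (Set.range D)) :=
    Algebra.isMulCommutative_adjoin K <| by
      rintro _ ⟨i, rfl⟩ _ ⟨j, rfl⟩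
      exact commute_pderiv i j
  (Algebra.adjoin K (Set.range D)).val.comp
    (aeval fun i => ⟨D i, Algebra.subset_adjoin ⟨i, rfl⟩⟩)

theorem diffAlgHom_X (i : σ) : diffAlgHom K σ (X i) = (pderiv i).toLinearMap := by
  simp [diffAlgHom]

/-- The `K`-linear map `f ↦ f ∘ F`, whose kernel is the apolar ideal of `F` and whose range is the
inverse system generated by `F`. -/
noncomputable def apolarMap (F : MvPolynomial σ K) : MvPolynomial σ K →ₗ[K] MvPolynomial σ K :=
  LinearMap.applyₗ F ∘ₗ (diffAlgHom K σ).toLinearMap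

theorem apolarMap_apply (F f : MvPolynomial σ K) : apolarMap F f = diffAlgHom K σ f F :=
  rfl

theorem apolarMap_zero_left (f : MvPolynomial σ K) : apolarMap 0 f = 0 :=
  map_zero (diffAlgHom K σ f)

theorem apolarMap_one (F : MvPolynomial σ K) : apolarMap F 1 = F := by
  rw [apolarMap_apply, map_one, Module.End.one_apply]

theorem apolarMap_X (F : MvPolynomial σ K) (i : σ) : apolarMap F (X i) = pderiv i F := by
  rw [apolarMap_apply, diffAlgHom_X, Derivation.coeFn_coe]

theorem apolarMap_mul (F f g : MvPolynomial σ K) :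
    apolarMap F (f * g) = apolarMap (apolarMap F g) f := by
  simp only [apolarMap_apply, map_mul, Module.End.mul_apply]

theorem eq_zero_of_forall_apolarMap_X_eq_zero [Finite σ] {f : MvPolynomial σ K}
    (hf : f.IsHomogeneous 1) (h : ∀ i, apolarMap (X i) f = 0) : f = 0 := by
  classical
  have := Fintype.ofFinite σ
  rw [← mem_homogeneousSubmodule, homogeneousSubmodule_one_eq_span_X,
    Submodule.mem_span_range_iff_exists_fun] at hf
  obtain ⟨c, rfl⟩ := hf
  have hc (i : σ) : c i = 0 := by
    have hi := h i
    simp only [map_sum, map_smul, apolarMap_X, pderiv_X, Pi.single_apply, smul_ite, smul_zero,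
      Finset.sum_ite_eq, Finset.mem_univ, if_true] at hi
    rwa [smul_eq_C_mul, mul_one, C_eq_zero] at hi
  simp only [hc, zero_smul, Finset.sum_const_zero]

section diffOp

variable [DecidableEq σ]

theorem diffAlgHom_monomial (s : σ →₀ ℕ) (c : K) :
    diffAlgHom K σ (monomial s c) = c • diffOp s := by
  rw [← mul_one c, ← smul_eq_mul, ← smul_monomial, map_smul, monomial_eq, C_1, one_mul,
    Finsupp.prod, ← Finset.prod_map_toList, map_list_prod, List.map_map, diffOp, smul_eq_mul,
    mul_one]
  simp only [Function.comp_def, map_pow, diffAlgHom_X]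

theorem apolarMap_eq_sum_diffOp (F f : MvPolynomial σ K) :
    apolarMap F f = ∑ s ∈ f.support, f.coeff s • diffOp s F := by
  conv_lhs => rw [f.as_sum]
  simp only [apolarMap_apply, map_sum, diffAlgHom_monomial,
    LinearMap.smul_apply]

theorem diffOp_add (s t : σ →₀ ℕ) :
    (diffOp (s + t) : Module.End K (MvPolynomial σ K)) = diffOp s * diffOp t := by
  have h := map_mul (diffAlgHom K σ) (monomial s 1) (monomial t 1)
  simpa only [monomial_mul, mul_one, diffAlgHom_monomial, one_smul] using h

theorem diffOp_single_monomial (i : σ) (k : ℕ) (t : σ →₀ ℕ) (c : K) :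
    diffOp (Finsupp.single i k) (monomial t c) =
      monomial (t - Finsupp.single i k) (c * (t i).descFactorial k) := by
  induction k with
  | zero => simp [diffOp]
  | succ k ih =>
    rw [add_comm k 1, Finsupp.single_add, diffOp_add, Module.End.mul_apply, ih]
    have hD : (diffOp (Finsupp.single i 1) : Module.End K (MvPolynomial σ K)) =
        (pderiv i).toLinearMap := by
      rw [← diffAlgHom_X, X, diffAlgHom_monomial, one_smul]
    rw [hD, Derivation.coeFn_coe, pderiv_monomial,
      tsub_tsub, add_comm (Finsupp.single i k), add_comm 1 k, Nat.descFactorial_succ]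
    simp [mul_comm, mul_left_comm]

theorem diffOp_monomial (s t : σ →₀ ℕ) (c : K) :
    diffOp s (monomial t c) =
      monomial (t - s) (c * s.prod fun i k => ((t i).descFactorial k : K)) := by
  induction s using Finsupp.induction with
  | zero => simp [diffOp]
  | single_add i k s hi _ ih =>
    rw [diffOp_add, Module.End.mul_apply, ih, diffOp_single_monomial, tsub_tsub, add_comm s,
      Finsupp.prod_add_index_of_disjoint, Finsupp.prod_single_index (by simp),
      Finsupp.tsub_apply, Finsupp.notMem_support_iff.mp hi, tsub_zero]
    · congr 1; ring
    · exact Finset.disjoint_of_subset_left Finsupp.support_single_subset (by simpa using hi)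

theorem diffOp_monomial_eq_zero {s t : σ →₀ ℕ} (h : ¬ s ≤ t) (c : K) :
    diffOp s (monomial t c) = 0 := by
  obtain ⟨i, hi⟩ : ∃ i, t i < s i := by simpa [Finsupp.le_def] using h
  rw [diffOp_monomial, Finsupp.prod,
    Finset.prod_eq_zero (i := i) (Finsupp.mem_support_iff.mpr (by lia)), mul_zero, map_zero]
  rw [Nat.descFactorial_of_lt hi, Nat.cast_zero]

theorem isHomogeneous_diffOp {s : σ →₀ ℕ} {G : MvPolynomial σ K} {n : ℕ}
    (hG : G.IsHomogeneous (n + s.degree)) : (diffOp s G).IsHomogeneous n := by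
  rw [G.as_sum, map_sum]
  refine IsHomogeneous.sum _ _ _ fun t ht => ?_
  by_cases hst : s ≤ t
  · rw [diffOp_monomial]
    refine isHomogeneous_monomial _ (add_right_cancel (b := s.degree) ?_)
    rw [← map_add, tsub_add_cancel_of_le hst, hG.degree_eq_sum_deg_support ht,
      Finsupp.degree_apply]
  · rw [diffOp_monomial_eq_zero hst]
    exact isHomogeneous_zero _ _ _

theorem diffOp_eq_zero_of_isHomogeneous {s : σ →₀ ℕ} {G : MvPolynomial σ K} {n : ℕ}
    (hG : G.IsHomogeneous n) (hn : n < s.degree) : diffOp s G = 0 := by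
  rw [G.as_sum, map_sum]
  refine Finset.sum_eq_zero fun t ht => diffOp_monomial_eq_zero (fun hst => hn.not_ge ?_) _
  rw [hG.degree_eq_sum_deg_support ht]
  exact Finsupp.degree_mono hst

theorem diffOp_sum_monomial {ι : Type*} [Fintype ι] {e : ι → σ →₀ ℕ} {s : σ →₀ ℕ} {a : ι}
    (h : ∀ b, s ≤ e b → b = a) :
    diffOp s (∑ b, monomial (e b) (1 : K)) =
      monomial (e a - s) (s.prod fun i k => ((e a i).descFactorial k : K)) := by
  rw [map_sum, Fintype.sum_eq_single a fun b hb => diffOp_monomial_eq_zero (mt (h b) hb) 1,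
    diffOp_monomial, one_mul]

end diffOp

theorem isHomogeneous_apolarMap {f F : MvPolynomial σ K} {k n : ℕ} (hf : f.IsHomogeneous k)
    (hF : F.IsHomogeneous (n + k)) : (apolarMap F f).IsHomogeneous n := by
  classical
  rw [apolarMap_eq_sum_diffOp]
  refine IsHomogeneous.sum _ _ _ fun s hs => ?_
  rw [smul_eq_C_mul]
  refine (isHomogeneous_diffOp ?_).C_mul _
  rwa [Finsupp.degree_apply, ← hf.degree_eq_sum_deg_support hs]

theorem apolarMap_eq_zero_of_isHomogeneous {f F : MvPolynomial σ K} {k n : ℕ}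
    (hf : f.IsHomogeneous k) (hF : F.IsHomogeneous n) (hn : n < k) : apolarMap F f = 0 := by
  classical
  rw [apolarMap_eq_sum_diffOp]
  refine Finset.sum_eq_zero fun s hs => ?_
  rw [diffOp_eq_zero_of_isHomogeneous hF, smul_zero]
  rwa [Finsupp.degree_apply, ← hf.degree_eq_sum_deg_support hs]

end Apolarity

section InverseSystem

section CommSemiring

variable {K : Type*} [CommSemiring K] {σ : Type*}

/-- The space `R_k ∘ F` of order `k` derivatives of `F`, that is, the image under `f ↦ f ∘ F` of
the forms `f` of degree `k`. -/
noncomputable def partialsSubmodule (F : MvPolynomial σ K) (k : ℕ) :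
    Submodule K (MvPolynomial σ K) :=
  (homogeneousSubmodule σ K k).map (apolarMap F)

theorem diffOp_mem_partialsSubmodule [DecidableEq σ] (F : MvPolynomial σ K) (s : σ →₀ ℕ) :
    diffOp s F ∈ partialsSubmodule F s.degree :=
  ⟨monomial s 1, isHomogeneous_monomial 1 rfl, by
    rw [apolarMap_apply, diffAlgHom_monomial, one_smul]⟩

theorem partialsSubmodule_le_homogeneousSubmodule {F : MvPolynomial σ K} {n k : ℕ}
    (hF : F.IsHomogeneous (n + k)) : partialsSubmodule F k ≤ homogeneousSubmodule σ K n := by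
  rintro _ ⟨f, hf, rfl⟩
  exact isHomogeneous_apolarMap hf hF

theorem partialsSubmodule_zero (F : MvPolynomial σ K) :
    partialsSubmodule F 0 = Submodule.span K {F} := by
  rw [partialsSubmodule, homogeneousSubmodule_zero, Submodule.one_eq_span, Submodule.map_span,
    Set.image_singleton, apolarMap_one]

theorem partialsSubmodule_eq_homogeneousSubmodule_one {F : MvPolynomial σ K} {d : ℕ}
    (hF : F.IsHomogeneous (d + 1)) (hX : ∀ i, X i ∈ partialsSubmodule F d) :
    partialsSubmodule F d = homogeneousSubmodule σ K 1 := by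
  refine (partialsSubmodule_le_homogeneousSubmodule (by rwa [add_comm])).antisymm ?_
  rw [homogeneousSubmodule_one_eq_span_X, Submodule.span_le]
  exact Set.range_subset_iff.mpr hX

theorem partialsSubmodule_eq_homogeneousSubmodule_zero {F : MvPolynomial σ K} {d : ℕ}
    (hF : F.IsHomogeneous (d + 1)) {i : σ} (hX : X i ∈ partialsSubmodule F d) :
    partialsSubmodule F (d + 1) = homogeneousSubmodule σ K 0 := by
  refine (partialsSubmodule_le_homogeneousSubmodule (by rwa [zero_add])).antisymm ?_
  obtain ⟨f, hf, hfX⟩ := hX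
  rw [homogeneousSubmodule_zero, Submodule.one_le]
  refine ⟨f * X i, IsHomogeneous.mul hf (isHomogeneous_X K i), ?_⟩
  rw [mul_comm, apolarMap_mul, hfX, apolarMap_X, pderiv_X_self]

theorem ne_zero_of_X_mem_partialsSubmodule [Nontrivial K] {F : MvPolynomial σ K} {d : ℕ} {i : σ}
    (hX : X i ∈ partialsSubmodule F d) : F ≠ 0 := by
  rintro rfl
  obtain ⟨f, -, hf⟩ := hX
  exact X_ne_zero i (hf.symm.trans (apolarMap_zero_left f))

theorem range_apolarMap {F : MvPolynomial σ K} {d : ℕ} (hF : F.IsHomogeneous d) :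
    LinearMap.range (apolarMap F) = ⨆ k : Fin (d + 1), partialsSubmodule F k := by
  refine le_antisymm ?_ (iSup_le fun k => LinearMap.map_le_range)
  rintro _ ⟨f, rfl⟩
  rw [← sum_homogeneousComponent f, map_sum]
  refine Submodule.sum_mem _ fun k _ => ?_
  by_cases hk : k < d + 1
  · exact Submodule.mem_iSup_of_mem ⟨k, hk⟩ ⟨_, homogeneousComponent_isHomogeneous k f, rfl⟩
  · rw [apolarMap_eq_zero_of_isHomogeneous (homogeneousComponent_isHomogeneous k f) hF (by lia)]
    exact zero_mem _

theorem mem_annIdeal [DecidableEq σ] {F f : MvPolynomial σ K} :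
    f ∈ annIdeal F ↔ apolarMap F f = 0 := by
  have hset : {f | diffAction f F = 0} = {f | apolarMap F f = 0} := by
    simp only [diffAction, apolarMap_eq_sum_diffOp]
  rw [annIdeal, hset]
  refine ⟨fun hf => ?_, fun hf => Ideal.subset_span hf⟩
  induction hf using Submodule.span_induction with
  | mem _ hf => exact hf
  | zero => exact map_zero _
  | add f g _ _ hf hg => rw [map_add, hf, hg, add_zero]
  | smul a f _ hf => rw [smul_eq_mul, apolarMap_mul, hf, apolarMap_zero_left]

end CommSemiring

section CommRing

variable {K : Type*} [CommRing K] {σ : Type*}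

/-- The isomorphism of `A_F` with the inverse system generated by `F`, induced by `f ↦ f ∘ F`. -/
noncomputable def quotientAnnIdealEquiv [DecidableEq σ] (F : MvPolynomial σ K) :
    (MvPolynomial σ K ⧸ annIdeal F) ≃ₗ[K] LinearMap.range (apolarMap F) :=
  (Submodule.Quotient.restrictScalarsEquiv K (annIdeal F)).symm ≪≫ₗ
    Submodule.quotEquivOfEq _ _ (by ext f; exact mem_annIdeal) ≪≫ₗ
      (apolarMap F).quotKerEquivRange

theorem coe_quotientAnnIdealEquiv_mk [DecidableEq σ] (F f : MvPolynomial σ K) :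
    (quotientAnnIdealEquiv F (Ideal.Quotient.mk _ f) : MvPolynomial σ K) = apolarMap F f :=
  rfl

theorem iSupIndep_homogeneousSubmodule (σ K : Type*) [CommRing K] :
    iSupIndep (homogeneousSubmodule σ K) :=
  letI := gradedAlgebra (σ := σ) (R := K)
  (DirectSum.Decomposition.isInternal (homogeneousSubmodule σ K)).submodule_iSupIndep

theorem finrank_homogeneousSubmodule_one [Nontrivial K] [Fintype σ] :
    Module.finrank K (homogeneousSubmodule σ K 1) = Fintype.card σ := by
  rw [homogeneousSubmodule_one_eq_span_X, finrank_span_eq_card (linearIndependent_X σ K)]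

end CommRing

theorem finrank_iSup_eq_sum_of_iSupIndep {K V ι : Type*} [DivisionRing K] [AddCommGroup V]
    [Module K V] [Fintype ι] {p : ι → Submodule K V} [∀ i, Module.Finite K (p i)]
    (hp : iSupIndep p) :
    Module.finrank K (⨆ i, p i : Submodule K V) = ∑ i, Module.finrank K (p i) := by
  classical
  rw [Submodule.iSup_eq_range_dfinsupp_lsum,
    LinearMap.finrank_range_of_inj hp.dfinsupp_lsum_injective]
  exact Module.finrank_directSum K fun i => p i

variable {K : Type*} [Field K] {σ : Type*}

theorem finrank_homogeneousSubmodule_zero :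
    Module.finrank K (homogeneousSubmodule σ K 0) = 1 := by
  rw [homogeneousSubmodule_zero, Submodule.one_eq_span, finrank_span_singleton one_ne_zero]

variable [DecidableEq σ]

theorem X_mem_partialsSubmodule_of_diffOp_eq {F : MvPolynomial σ K} {s : σ →₀ ℕ} {c : K} {i : σ}
    (hc : c ≠ 0) (h : diffOp s F = c • X i) : X i ∈ partialsSubmodule F s.degree :=
  (Submodule.smul_mem_iff _ hc).mp (h ▸ diffOp_mem_partialsSubmodule F s)

theorem hilbertFn_annIdeal (F : MvPolynomial σ K) (k : ℕ) :
    hilbertFn (annIdeal F) k = Module.finrank K (partialsSubmodule F k) := by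
  let ψ := (LinearMap.range (apolarMap F)).subtype ∘ₗ (quotientAnnIdealEquiv F).toLinearMap
  have hψ : Function.Injective ψ :=
    Subtype.val_injective.comp (quotientAnnIdealEquiv F).injective
  have hmk : ψ ∘ₗ (Ideal.Quotient.mkₐ K (annIdeal F)).toLinearMap = apolarMap F :=
    LinearMap.ext (coe_quotientAnnIdealEquiv_mk F)
  rw [hilbertFn, (Submodule.equivMapOfInjective ψ hψ _).finrank_eq, ← Submodule.map_comp, hmk,
    partialsSubmodule]

theorem finrank_quotient_annIdeal [Finite σ] {F : MvPolynomial σ K} {d : ℕ}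
    (hF : F.IsHomogeneous d) :
    Module.finrank K (MvPolynomial σ K ⧸ annIdeal F) =
      ∑ k ∈ Finset.range (d + 1), hilbertFn (annIdeal F) k := by
  have hle (k : Fin (d + 1)) : partialsSubmodule F k ≤ homogeneousSubmodule σ K (d - k) :=
    partialsSubmodule_le_homogeneousSubmodule (by rwa [Nat.sub_add_cancel (by lia)])
  have hindep : iSupIndep fun k : Fin (d + 1) => partialsSubmodule F k :=
    ((iSupIndep_homogeneousSubmodule σ K).comp (f := fun k : Fin (d + 1) => d - (k : ℕ))
      fun k l hkl => by simp only at hkl; lia).mono hle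
  have hfin (k : ℕ) : Module.Finite K (partialsSubmodule F k) :=
    Module.Finite.iff_fg.mpr ((homogeneousSubmodule_fg σ K k).map _)
  rw [(quotientAnnIdealEquiv F).finrank_eq, range_apolarMap hF,
    finrank_iSup_eq_sum_of_iSupIndep hindep, Finset.sum_range]
  simp only [hilbertFn_annIdeal]

theorem hilbertFn_annIdeal_zero {F : MvPolynomial σ K} (hF : F ≠ 0) :
    hilbertFn (annIdeal F) 0 = 1 := by
  rw [hilbertFn_annIdeal, partialsSubmodule_zero, finrank_span_singleton hF]

theorem hilbertFn_annIdeal_one_of_forall_X_mem [Fintype σ] {F : MvPolynomial σ K} {d : ℕ}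
    (hX : ∀ i, X i ∈ partialsSubmodule F d) :
    hilbertFn (annIdeal F) 1 = Fintype.card σ := by
  have hinj : Function.Injective ((apolarMap F).domRestrict (homogeneousSubmodule σ K 1)) := by
    rw [injective_iff_map_eq_zero]
    rintro ⟨ℓ, hℓ⟩ (hℓF : apolarMap F ℓ = 0)
    refine Subtype.ext (eq_zero_of_forall_apolarMap_X_eq_zero hℓ fun i => ?_)
    obtain ⟨f, -, hf⟩ := hX i
    rw [← hf, ← apolarMap_mul, mul_comm, apolarMap_mul, hℓF, apolarMap_zero_left]
  rw [hilbertFn_annIdeal, partialsSubmodule, ← LinearMap.range_domRestrict,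
    LinearMap.finrank_range_of_inj hinj, finrank_homogeneousSubmodule_one]

theorem hilbertFn_annIdeal_of_forall_X_mem [Fintype σ] {F : MvPolynomial σ K} {d : ℕ}
    (hF : F.IsHomogeneous (d + 1)) (hX : ∀ i, X i ∈ partialsSubmodule F d) :
    hilbertFn (annIdeal F) d = Fintype.card σ := by
  rw [hilbertFn_annIdeal, partialsSubmodule_eq_homogeneousSubmodule_one hF hX,
    finrank_homogeneousSubmodule_one]

theorem hilbertFn_annIdeal_succ_of_X_mem {F : MvPolynomial σ K} {d : ℕ}
    (hF : F.IsHomogeneous (d + 1)) {i : σ} (hX : X i ∈ partialsSubmodule F d) :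
    hilbertFn (annIdeal F) (d + 1) = 1 := by
  rw [hilbertFn_annIdeal, partialsSubmodule_eq_homogeneousSubmodule_zero hF hX,
    finrank_homogeneousSubmodule_zero]

end InverseSystem

section Perazzo

variable {m d e : ℕ}

theorem card_mIdx_succ (m e : ℕ) : Fintype.card (MIdx m (e + 1)) = (m + e - 1).choose e := by
  have symEquiv : MIdx m (e + 1) ≃ Sym (Fin m) e := (Sym.equivNatSumOfFintype (Fin m) e).symm
  rw [Fintype.card_congr symEquiv, Sym.card_sym_eq_choose, Fintype.card_fin]

theorem mIdx_eq_of_le {α β : MIdx m d} (h : α.1 ≤ β.1) : β = α :=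
  Subtype.ext <| funext fun j => Eq.symm <|
    (Finset.sum_eq_sum_iff_of_le fun j _ => h j).mp (α.2.trans β.2.symm) j (Finset.mem_univ j)

/-- The exponent vector of the monomial `X_α Y^α` of the full Perazzo form. -/
noncomputable def perazzoExponent (α : MIdx m d) : PIdx m d →₀ ℕ :=
  Finsupp.sumElim (Finsupp.single α 1) (Finsupp.equivFunOnFinite.symm α.1)

theorem perazzoExponent_inl (α β : MIdx m d) :
    perazzoExponent α (Sum.inl β) = Finsupp.single α 1 β :=
  rfl

theorem perazzoExponent_inr (α : MIdx m d) (j : Fin m) :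
    perazzoExponent α (Sum.inr j) = α.1 j :=
  rfl

theorem degree_perazzoExponent (α : MIdx m (e + 1)) : (perazzoExponent α).degree = e + 1 := by
  rw [Finsupp.degree_eq_sum, Fintype.sum_sum_type]
  simp only [perazzoExponent_inl, perazzoExponent_inr, α.2, Finsupp.univ_sum_single_apply]
  lia

theorem perazzoForm_eq_sum_monomial (K : Type*) [CommSemiring K] (m d : ℕ) :
    perazzoForm K m d = ∑ α : MIdx m d, monomial (perazzoExponent α) 1 := by
  refine Finset.sum_congr rfl fun α _ => ?_
  rw [monomial_eq, C_1, one_mul, perazzoExponent, Finsupp.prod_sumElim,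
    Finsupp.prod_single_index (pow_zero (X (Sum.inl α))),
    Finsupp.prod_fintype _ _ fun j => pow_zero (X (Sum.inr j))]
  simp

theorem isHomogeneous_perazzoForm (K : Type*) [CommSemiring K] (m e : ℕ) :
    (perazzoForm K m (e + 1)).IsHomogeneous (e + 1) := by
  rw [perazzoForm_eq_sum_monomial]
  exact IsHomogeneous.sum _ _ _ fun α _ => isHomogeneous_monomial 1 (degree_perazzoExponent α)

theorem diffOp_y_perazzoForm (K : Type*) [CommSemiring K] (α : MIdx m d) :
    diffOp (Finsupp.sumElim 0 (Finsupp.equivFunOnFinite.symm α.1)) (perazzoForm K m d) =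
      ((∏ j, (α.1 j).factorial : ℕ) : K) • X (Sum.inl α) := by
  have hle (β : MIdx m d)
      (h : Finsupp.sumElim 0 (Finsupp.equivFunOnFinite.symm α.1) ≤ perazzoExponent β) : β = α :=
    mIdx_eq_of_le fun j => h (Sum.inr j)
  have hexp : perazzoExponent α - Finsupp.sumElim 0 (Finsupp.equivFunOnFinite.symm α.1) =
      Finsupp.single (Sum.inl α) 1 := by
    ext (β | j) <;> simp [perazzoExponent, Finsupp.single_apply]
  rw [perazzoForm_eq_sum_monomial, diffOp_sum_monomial hle, hexp, Finsupp.prod_sumElim,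
    Finsupp.prod_zero_index, one_mul, Finsupp.prod_fintype _ _ (by simp), X, smul_monomial]
  simp [perazzoExponent_inr, Nat.descFactorial_self]

theorem diffOp_xy_perazzoForm (K : Type*) [CommSemiring K] {α : MIdx m (e + 2)} {j : Fin m}
    (hα : α.1 = Pi.single j (e + 1)) :
    diffOp (Finsupp.sumElim (Finsupp.single α 1) (Finsupp.single j e))
      (perazzoForm K m (e + 2)) = ((e + 1).factorial : K) • X (Sum.inr j) := by
  have hle (β : MIdx m (e + 2))
      (h : Finsupp.sumElim (Finsupp.single α 1) (Finsupp.single j e) ≤ perazzoExponent β) :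
      β = α := by
    have := h (Sum.inl α)
    simp only [Finsupp.sumElim_inl, perazzoExponent_inl, Finsupp.single_apply] at this
    grind
  have hexp : perazzoExponent α - Finsupp.sumElim (Finsupp.single α 1) (Finsupp.single j e) =
      Finsupp.single (Sum.inr j) 1 := by
    ext (β | k)
    · rw [Finsupp.tsub_apply, perazzoExponent_inl, Finsupp.sumElim_inl, tsub_self,
        Finsupp.single_eq_of_ne Sum.inl_ne_inr]
    · rw [Finsupp.tsub_apply, perazzoExponent_inr, Finsupp.sumElim_inr, hα, Pi.single_apply,
        Finsupp.single_apply, Finsupp.single_apply]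
      grind
  rw [perazzoForm_eq_sum_monomial, diffOp_sum_monomial hle, hexp, Finsupp.prod_sumElim,
    Finsupp.prod_single_index (by simp), Finsupp.prod_single_index (by simp), X, smul_monomial]
  have := Nat.factorial_mul_descFactorial (Nat.le_succ e)
  simp_all [perazzoExponent_inl, perazzoExponent_inr]

variable {K : Type*} [Field K]

theorem X_inl_mem_partialsSubmodule_perazzoForm (hd : (e.factorial : K) ≠ 0)
    (α : MIdx m (e + 1)) :
    X (Sum.inl α) ∈ partialsSubmodule (perazzoForm K m (e + 1)) e := by
  have hsum : ∑ j, α.1 j = e := α.2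
  have hdvd : ∏ j, (α.1 j).factorial ∣ e.factorial := by
    simpa only [hsum] using Nat.prod_factorial_dvd_factorial_sum Finset.univ α.1
  have hne : ((∏ j, (α.1 j).factorial : ℕ) : K) ≠ 0 := fun h0 =>
    hd (zero_dvd_iff.mp (h0 ▸ Nat.cast_dvd_cast hdvd))
  convert X_mem_partialsSubmodule_of_diffOp_eq hne (diffOp_y_perazzoForm K α)
  simp [Finsupp.degree_eq_sum, hsum]

theorem X_inr_mem_partialsSubmodule_perazzoForm (hd : ((e + 1).factorial : K) ≠ 0) (j : Fin m) :
    X (Sum.inr j) ∈ partialsSubmodule (perazzoForm K m (e + 2)) (e + 1) := by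
  let α : MIdx m (e + 2) := ⟨Pi.single j (e + 1), by simp⟩
  convert X_mem_partialsSubmodule_of_diffOp_eq hd (diffOp_xy_perazzoForm K (α := α) rfl)
  rw [Finsupp.sumElim_eq_add, map_add]
  simp [add_comm]

theorem X_mem_partialsSubmodule_perazzoForm (hd : ((e + 1).factorial : K) ≠ 0) :
    ∀ v : PIdx m (e + 2), X v ∈ partialsSubmodule (perazzoForm K m (e + 2)) (e + 1)
  | Sum.inl α => X_inl_mem_partialsSubmodule_perazzoForm hd α
  | Sum.inr j => X_inr_mem_partialsSubmodule_perazzoForm hd j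

end Perazzo

theorem hilbert_fullPerazzo_socle_degree_three_general
    (K : Type*) [Field K] (htwo : (2 : K) ≠ 0) (m : ℕ) (hm : 1 ≤ m)
    (n : ℕ) (hn : n + 1 = Nat.choose (m + 1) (m - 1)) :
    hilbertFn (annIdeal (perazzoForm K m 3)) 0 = 1 ∧
    hilbertFn (annIdeal (perazzoForm K m 3)) 1 = n + m + 1 ∧
    hilbertFn (annIdeal (perazzoForm K m 3)) 2 = n + m + 1 ∧
    hilbertFn (annIdeal (perazzoForm K m 3)) 3 = 1 ∧
    Module.finrank K (MvPolynomial (PIdx m 3) K ⧸ annIdeal (perazzoForm K m 3))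
      = 2 * (n + m + 2) := by
  have hF : (perazzoForm K m 3).IsHomogeneous 3 := isHomogeneous_perazzoForm K m 2
  have hX : ∀ v, X v ∈ partialsSubmodule (perazzoForm K m 3) 2 :=
    X_mem_partialsSubmodule_perazzoForm (e := 1) (by simpa [Nat.factorial])
  have hcard : Fintype.card (PIdx m 3) = n + m + 1 := by
    rw [Fintype.card_sum, Fintype.card_fin, card_mIdx_succ, Nat.add_succ_sub_one,
      Nat.choose_symm_of_eq_add (show m + 1 = 2 + (m - 1) by lia), ← hn]
    lia
  let y : PIdx m 3 := Sum.inr ⟨0, hm⟩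
  have h0 := hilbertFn_annIdeal_zero (ne_zero_of_X_mem_partialsSubmodule (hX y))
  have h1 := (hilbertFn_annIdeal_one_of_forall_X_mem hX).trans hcard
  have h2 := (hilbertFn_annIdeal_of_forall_X_mem hF hX).trans hcard
  have h3 := hilbertFn_annIdeal_succ_of_X_mem hF (hX y)
  refine ⟨h0, h1, h2, h3, ?_⟩
  rw [finrank_quotient_annIdeal hF]
  simp only [Finset.sum_range_succ, Finset.sum_range_zero, h0, h1, h2, h3]
  lia

/-- For `d = 3`, with `n + 1 = binom(m+1, m-1)` the number of `x`-variables, the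
`h`-vector of the full Perazzo algebra `A_F` is `(1, n+m+1, n+m+1, 1)` and
`dim_K A_F = 2(n+m+2)`. -/
theorem hilbert_fullPerazzo_socle_degree_three
    (K : Type*) [Field K] [CharZero K] (m : ℕ) (hm : 2 ≤ m)
    (n : ℕ) (hn : n + 1 = Nat.choose (m + 1) (m - 1)) :
    hilbertFn (annIdeal (perazzoForm K m 3)) 0 = 1 ∧
    hilbertFn (annIdeal (perazzoForm K m 3)) 1 = n + m + 1 ∧
    hilbertFn (annIdeal (perazzoForm K m 3)) 2 = n + m + 1 ∧
    hilbertFn (annIdeal (perazzoForm K m 3)) 3 = 1 ∧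
    Module.finrank K (MvPolynomial (PIdx m 3) K ⧸ annIdeal (perazzoForm K m 3))
      = 2 * (n + m + 2) :=
  hilbert_fullPerazzo_socle_degree_three_general K two_ne_zero m (one_le_two.trans hm) n hn
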